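/- Let d ≥ 3 be an integer, σ > 0, and let α be a Borel probability measure on ℝ^d with topological support 𝓜. Then for every y ∈ ℝ^d ∖ 𝓜: (i) h(y) < ∞; (ii) h is differentiable at y with gradient ∇h(y) = ∫ ∇_y G_{σ²}(x,y) α(dx), where ∇_y G_{σ²}(x,y) = (1/σ²) ∫₀^∞ e^{−t/σ²} (2πt)^{−d/2} e^{−|x−y|²/(2t)} · ((x−y)/t) dt; and (iii) ∇ log h(y) = (1/h(y)) ∫ ∇_y log G_{σ²}(x,y) · G_{σ²}(x,y) α(dx), i.e. the backward drift b(y) = ∇ log h(y) equals the mean of ∇_y log G_{σ²}(x,y) under the posterior measure (1/h(y)) G_{σ²}(x,y) α(dx). -/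

import Mathlib

open MeasureTheory Real

/-- The resolvent (Green) kernel of `d`-dimensional Brownian motion killed at an
independent exponential time with parameter `1/σ²`. -/
noncomputable def greenKernel (d : ℕ) (σ : ℝ) (x y : EuclideanSpace ℝ (Fin d)) : ℝ :=
  (1 / σ ^ 2) * ∫ t in Set.Ioi (0 : ℝ),
    Real.exp (-t / σ ^ 2) * (2 * Real.pi * t) ^ (-(d : ℝ) / 2) *
      Real.exp (-‖x - y‖ ^ 2 / (2 * t))

/-- The gradient in `y` of the Green kernel `G_{σ²}(x, ·)`:
`∇_y G_{σ²}(x,y) = (1/σ²) ∫₀^∞ e^{−t/σ²} (2πt)^{−d/2} e^{−|x−y|²/(2t)} (x−y)/t dt`. -/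
noncomputable def greenKernelGrad (d : ℕ) (σ : ℝ) (x y : EuclideanSpace ℝ (Fin d)) :
    EuclideanSpace ℝ (Fin d) :=
  (1 / σ ^ 2) • ∫ t in Set.Ioi (0 : ℝ),
    (Real.exp (-t / σ ^ 2) * (2 * Real.pi * t) ^ (-(d : ℝ) / 2) *
      Real.exp (-‖x - y‖ ^ 2 / (2 * t)) * t⁻¹) • (x - y)

/-- The topological support of a measure. -/
def measureSupport {E : Type*} [TopologicalSpace E] [MeasurableSpace E]
    (α : Measure E) : Set E :=
  {x | ∀ U : Set E, IsOpen U → x ∈ U → 0 < α U}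

/-! Off the support of `α` the distance `‖x - z‖` is bounded below by some `a > 0`, for `α`-almost
every `x` and all `z` near `y`. There the factor `exp (-‖x - z‖² / (2t))` beats both the singularity
`t ^ (-d/2)` and the extra `t⁻¹ ‖x - z‖` of the gradient as `t → 0`, while the killing factor
`exp (-t / σ²)` gives integrability as `t → ∞`. Hence `G` and its gradient are bounded on
`{a ≤ ‖x - z‖}`, and one differentiates under the integral sign twice: first in `t`, then in `x`. -/

open Filter Metric Set Topology

theorem integral_pos_of_ae_pos {X : Type*} [MeasurableSpace X] {μ : Measure X} [NeZero μ]
    {f : X → ℝ} (hf : Integrable f μ) (hpos : ∀ᵐ x ∂μ, 0 < f x) : 0 < ∫ x, f x ∂μ := by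
  rw [integral_pos_iff_support_of_nonneg_ae (hpos.mono fun _ => le_of_lt) hf]
  have hsupp : Function.support f =ᵐ[μ] univ :=
    eventuallyEq_univ.2 (hpos.mono fun _ => ne_of_gt)
  rw [measure_congr hsupp]
  exact NeZero.pos _

theorem exists_pos_ae_le_dist_of_notMem_measureSupport {X : Type*} [PseudoMetricSpace X]
    [MeasurableSpace X] {μ : Measure X} {y : X} (hy : y ∉ measureSupport μ) :
    ∃ r > 0, ∀ᵐ x ∂μ, r ≤ dist x y := by
  simp only [measureSupport, mem_ofPred_eq, not_forall, not_lt, nonpos_iff_eq_zero] at hy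
  obtain ⟨U, hU, hyU, hμU⟩ := hy
  obtain ⟨r, hr, hrU⟩ := Metric.isOpen_iff.1 hU y hyU
  refine ⟨r, hr, ?_⟩
  filter_upwards [measure_eq_zero_iff_ae_notMem.1 hμU] with x hx
  exact not_lt.1 fun hxy => hx (hrU hxy)

theorem half_le_norm_sub_of_mem_ball {E : Type*} [SeminormedAddCommGroup E] {x y z : E} {r : ℝ}
    (hxy : r ≤ dist x y) (hz : z ∈ ball y (r / 2)) : r / 2 ≤ ‖x - z‖ := by
  rw [mem_ball] at hz
  rw [← dist_eq_norm]
  linarith [dist_triangle x z y]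

theorem rpow_mul_exp_neg_mul_le {s c u : ℝ} (hs : 0 ≤ s) (hc : 0 < c) (hu : 0 ≤ u) :
    u ^ s * exp (-(c * u)) ≤ (s / c) ^ s := by
  rcases hs.eq_or_lt with rfl | hs
  · simpa using mul_nonneg hc.le hu
  have hpow : (c * u / s) ^ s ≤ exp (c * u) :=
    calc (c * u / s) ^ s ≤ exp (c * u / s) ^ s := by
          gcongr
          linarith [add_one_le_exp (c * u / s)]
      _ = exp (c * u) := by rw [← exp_mul, div_mul_cancel₀ _ hs.ne']
  have hsplit : u ^ s = (s / c) ^ s * (c * u / s) ^ s := by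
    rw [← mul_rpow (by positivity) (by positivity)]
    congr 1
    field_simp
  calc u ^ s * exp (-(c * u)) = (s / c) ^ s * ((c * u / s) ^ s * exp (-(c * u))) := by
        rw [hsplit, mul_assoc]
    _ ≤ (s / c) ^ s * (exp (c * u) * exp (-(c * u))) := by gcongr
    _ = (s / c) ^ s := by rw [← exp_add, add_neg_cancel, exp_zero, mul_one]

theorem exp_neg_half_sq_div_mul_inv_mul_le {a r t : ℝ} (ha : 0 < a) (har : a ≤ r) (ht : 0 < t) :
    exp (-(r ^ 2 / 2) / t) * t⁻¹ * r ≤ 4 / a * exp (-(a ^ 2 / 4) / t) := by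
  have hr : 0 < r := ha.trans_le har
  -- Half of the Gaussian exponent absorbs the prefactor, the other half survives.
  set q := r ^ 2 / 4 / t with hq
  have hexp : -(r ^ 2 / 2) / t = -q + -q := by rw [hq]; ring
  have hprefactor : t⁻¹ * r = 4 / r * q := by rw [hq]; field_simp
  have hqexp : q * exp (-q) ≤ 1 :=
    (mul_exp_neg_le_exp_neg_one q).trans (exp_le_one_iff.2 (by norm_num))
  calc exp (-(r ^ 2 / 2) / t) * t⁻¹ * r = 4 / r * (q * exp (-q)) * exp (-q) := by
        rw [mul_assoc, hprefactor, hexp, exp_add]; ring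
    _ ≤ 4 / r * 1 * exp (-q) := by gcongr
    _ ≤ 4 / a * exp (-(a ^ 2 / 4) / t) := by rw [mul_one, hq, neg_div]; gcongr

section Gradient

variable {E : Type*} [NormedAddCommGroup E] [InnerProductSpace ℝ E] [CompleteSpace E]

theorem hasGradientAt_comp_of_hasDerivAt {φ : ℝ → ℝ} {φ' : ℝ} {f : E → ℝ} {f' z : E}
    (hf : HasGradientAt f f' z) (hφ : HasDerivAt φ φ' (f z)) :
    HasGradientAt (fun w => φ (f w)) (φ' • f') z := by
  rw [hasGradientAt_iff_hasFDerivAt] at hf ⊢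
  exact (hφ.comp_hasFDerivAt z hf).congr_fderiv (by simp)

theorem hasGradientAt_half_norm_sub_sq (x z : E) :
    HasGradientAt (fun w => ‖x - w‖ ^ 2 / 2) (z - x) z := by
  rw [hasGradientAt_iff_hasFDerivAt]
  have hsq := ((hasFDerivAt_id z).const_sub x).norm_sq.mul_const (2 : ℝ)⁻¹
  refine hsq.congr_fderiv ?_
  ext v
  simp

theorem hasGradientAt_integral_of_dominated_of_gradient_le {X : Type*} [MeasurableSpace X]
    {μ : Measure X} {F : E → X → ℝ} {F' : E → X → E} {bound : X → ℝ} {s : Set E} {z : E}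
    (hs : s ∈ 𝓝 z) (hF_meas : ∀ᶠ w in 𝓝 z, AEStronglyMeasurable (F w) μ)
    (hF_int : Integrable (F z) μ) (hF'_int : Integrable (F' z) μ)
    (h_bound : ∀ᵐ a ∂μ, ∀ w ∈ s, ‖F' w a‖ ≤ bound a) (bound_integrable : Integrable bound μ)
    (h_diff : ∀ᵐ a ∂μ, ∀ w ∈ s, HasGradientAt (F · a) (F' w a) w) :
    HasGradientAt (fun w => ∫ a, F w a ∂μ) (∫ a, F' z a ∂μ) z := by
  have hderiv := hasFDerivAt_integral_of_dominated_of_fderiv_le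
    (F' := fun w a => innerSL ℝ (F' w a)) hs hF_meas hF_int
    ((innerSL ℝ).integrable_comp hF'_int).aestronglyMeasurable
    (by simpa only [innerSL_apply_norm] using h_bound) bound_integrable h_diff
  rwa [(innerSL ℝ).integral_comp_comm hF'_int] at hderiv

end Gradient

/-- The heat kernel of `d`-dimensional Brownian motion killed at rate `1 / σ²`, at time `t`, as a
function of half the squared distance `c = |x - y|² / 2`. The Green kernel is its integral over `t`,
up to the factor `1 / σ²`. -/
noncomputable def killedHeatProfile (d : ℕ) (σ c t : ℝ) : ℝ :=
  exp (-t / σ ^ 2) * (2 * π * t) ^ (-(d : ℝ) / 2) * exp (-c / t)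

section KilledHeatProfile

variable {d : ℕ} {σ c t : ℝ}

theorem killedHeatProfile_pos (ht : 0 < t) : 0 < killedHeatProfile d σ c t := by
  unfold killedHeatProfile
  positivity

theorem antitone_killedHeatProfile (ht : 0 < t) : Antitone fun c => killedHeatProfile d σ c t := by
  intro b c hbc
  simp only [killedHeatProfile]
  gcongr

@[fun_prop]
theorem measurable_killedHeatProfile :
    Measurable fun p : ℝ × ℝ => killedHeatProfile d σ p.1 p.2 := by
  unfold killedHeatProfile
  fun_prop

theorem hasDerivAt_killedHeatProfile :
    HasDerivAt (fun c => killedHeatProfile d σ c t) (-(killedHeatProfile d σ c t * t⁻¹)) c := by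
  refine (((hasDerivAt_neg c).div_const t).exp.const_mul _).congr_deriv ?_
  rw [killedHeatProfile]
  ring

theorem killedHeatProfile_le_exp_mul (hc : 0 < c) (ht : 0 < t) :
    killedHeatProfile d σ c t ≤
      exp (-(1 / σ ^ 2) * t) * (d / 2 / (2 * π * c)) ^ ((d : ℝ) / 2) := by
  have hinv : (2 * π * t) ^ (-(d : ℝ) / 2) = (2 * π * t)⁻¹ ^ ((d : ℝ) / 2) := by
    rw [neg_div, rpow_neg (by positivity), inv_rpow (by positivity)]
  have hexp : -c / t = -(2 * π * c * (2 * π * t)⁻¹) := by field_simp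
  have hkill : -t / σ ^ 2 = -(1 / σ ^ 2) * t := by ring
  rw [killedHeatProfile, mul_assoc, hinv, hexp, hkill]
  gcongr
  exact rpow_mul_exp_neg_mul_le (by positivity) (by positivity) (by positivity)

theorem integrableOn_killedHeatProfile (hσ : σ ≠ 0) (hc : 0 < c) :
    IntegrableOn (killedHeatProfile d σ c) (Ioi 0) := by
  have hkill : IntegrableOn (fun t => exp (-(1 / σ ^ 2) * t)) (Ioi 0) :=
    integrableOn_exp_mul_Ioi (neg_lt_zero.2 (by positivity)) 0
  refine (hkill.mul_const ((d / 2 / (2 * π * c)) ^ ((d : ℝ) / 2))).mono' (by fun_prop) ?_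
  filter_upwards [ae_restrict_mem measurableSet_Ioi] with t ht
  rw [norm_of_nonneg (killedHeatProfile_pos ht).le]
  exact killedHeatProfile_le_exp_mul hc ht

theorem integrableOn_killedHeatProfile_half_norm_sq {E : Type*} [NormedAddCommGroup E] {v : E}
    (hσ : σ ≠ 0) (hv : v ≠ 0) : IntegrableOn (killedHeatProfile d σ (‖v‖ ^ 2 / 2)) (Ioi 0) :=
  integrableOn_killedHeatProfile hσ (half_pos (pow_pos (norm_pos_iff.2 hv) 2))

theorem norm_killedHeatProfile_smul_le {E : Type*} [SeminormedAddCommGroup E] [NormedSpace ℝ E]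
    {v : E} {a : ℝ} (ha : 0 < a) (hv : a ≤ ‖v‖) (ht : 0 < t) :
    ‖(killedHeatProfile d σ (‖v‖ ^ 2 / 2) t * t⁻¹) • v‖ ≤
      4 / a * killedHeatProfile d σ (a ^ 2 / 4) t := by
  rw [norm_smul, norm_of_nonneg (mul_pos (killedHeatProfile_pos ht) (inv_pos.2 ht)).le]
  unfold killedHeatProfile
  set w := exp (-t / σ ^ 2) * (2 * π * t) ^ (-(d : ℝ) / 2)
  calc w * exp (-(‖v‖ ^ 2 / 2) / t) * t⁻¹ * ‖v‖
      = w * (exp (-(‖v‖ ^ 2 / 2) / t) * t⁻¹ * ‖v‖) := by ring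
    _ ≤ w * (4 / a * exp (-(a ^ 2 / 4) / t)) :=
        mul_le_mul_of_nonneg_left (exp_neg_half_sq_div_mul_inv_mul_le ha hv ht) (by positivity)
    _ = 4 / a * (w * exp (-(a ^ 2 / 4) / t)) := by ring

theorem integrableOn_killedHeatProfile_smul {E : Type*} [NormedAddCommGroup E] [NormedSpace ℝ E]
    {v : E} (hσ : σ ≠ 0) (hv : v ≠ 0) :
    IntegrableOn (fun t => (killedHeatProfile d σ (‖v‖ ^ 2 / 2) t * t⁻¹) • v) (Ioi 0) := by
  have hv' : 0 < ‖v‖ := norm_pos_iff.2 hv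
  have hmeas : Measurable fun t => killedHeatProfile d σ (‖v‖ ^ 2 / 2) t * t⁻¹ := by fun_prop
  refine ((integrableOn_killedHeatProfile (d := d) (c := ‖v‖ ^ 2 / 4) hσ (by positivity)).const_mul
    (4 / ‖v‖)).mono' (hmeas.aestronglyMeasurable.smul_const v) ?_
  filter_upwards [ae_restrict_mem measurableSet_Ioi] with t ht
  exact norm_killedHeatProfile_smul_le hv' le_rfl ht

variable {E : Type*} [NormedAddCommGroup E] [InnerProductSpace ℝ E] [CompleteSpace E]

theorem hasGradientAt_killedHeatProfile (x z : E) :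
    HasGradientAt (fun w => killedHeatProfile d σ (‖x - w‖ ^ 2 / 2) t)
      ((killedHeatProfile d σ (‖x - z‖ ^ 2 / 2) t * t⁻¹) • (x - z)) z := by
  convert hasGradientAt_comp_of_hasDerivAt (hasGradientAt_half_norm_sub_sq x z)
    hasDerivAt_killedHeatProfile using 1
  rw [neg_smul, ← smul_neg, neg_sub]

theorem hasGradientAt_integral_killedHeatProfile {x z : E} (hσ : σ ≠ 0) (hxz : x ≠ z) :
    HasGradientAt (fun w => ∫ t in Ioi 0, killedHeatProfile d σ (‖x - w‖ ^ 2 / 2) t)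
      (∫ t in Ioi 0, (killedHeatProfile d σ (‖x - z‖ ^ 2 / 2) t * t⁻¹) • (x - z)) z := by
  set a := dist x z / 2
  have ha : 0 < a := half_pos (dist_pos.2 hxz)
  refine hasGradientAt_integral_of_dominated_of_gradient_le
    (F' := fun w t => (killedHeatProfile d σ (‖x - w‖ ^ 2 / 2) t * t⁻¹) • (x - w))
    (bound := fun t => 4 / a * killedHeatProfile d σ (a ^ 2 / 4) t)
    (ball_mem_nhds z ha) (Eventually.of_forall fun w => by fun_prop)
    (integrableOn_killedHeatProfile_half_norm_sq hσ (sub_ne_zero.2 hxz))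
    (integrableOn_killedHeatProfile_smul hσ (sub_ne_zero.2 hxz)) ?_
    ((integrableOn_killedHeatProfile hσ (by positivity)).const_mul _)
    (Eventually.of_forall fun t w _ => hasGradientAt_killedHeatProfile x w)
  filter_upwards [ae_restrict_mem measurableSet_Ioi] with t ht w hw
  exact norm_killedHeatProfile_smul_le ha (half_le_norm_sub_of_mem_ball le_rfl hw) ht

end KilledHeatProfile

section GreenKernel

variable {d : ℕ} {σ a r : ℝ} {x y z : EuclideanSpace ℝ (Fin d)}

theorem greenKernel_eq_integral_killedHeatProfile :
    greenKernel d σ x z =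
      1 / σ ^ 2 * ∫ t in Ioi 0, killedHeatProfile d σ (‖x - z‖ ^ 2 / 2) t := by
  simp only [greenKernel, killedHeatProfile, neg_div, div_div]

theorem greenKernelGrad_eq_integral_killedHeatProfile :
    greenKernelGrad d σ x z =
      (1 / σ ^ 2) • ∫ t in Ioi 0,
        (killedHeatProfile d σ (‖x - z‖ ^ 2 / 2) t * t⁻¹) • (x - z) := by
  simp only [greenKernelGrad, killedHeatProfile, neg_div, div_div]

theorem stronglyMeasurable_greenKernel : StronglyMeasurable fun x => greenKernel d σ x z := by
  have hintegrand : StronglyMeasurable (Function.uncurry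
      fun (x : EuclideanSpace ℝ (Fin d)) t => killedHeatProfile d σ (‖x - z‖ ^ 2 / 2) t) :=
    Measurable.stronglyMeasurable (by fun_prop)
  simp only [greenKernel_eq_integral_killedHeatProfile]
  exact hintegrand.integral_prod_right.const_mul _

theorem stronglyMeasurable_greenKernelGrad :
    StronglyMeasurable fun x => greenKernelGrad d σ x z := by
  have hintegrand : StronglyMeasurable (Function.uncurry fun (x : EuclideanSpace ℝ (Fin d)) t =>
      (killedHeatProfile d σ (‖x - z‖ ^ 2 / 2) t * t⁻¹) • (x - z)) :=
    Measurable.stronglyMeasurable (by fun_prop)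
  simp only [greenKernelGrad_eq_integral_killedHeatProfile]
  exact (hintegrand.integral_prod_right (ν := volume.restrict (Ioi 0))).const_smul (1 / σ ^ 2)

theorem norm_greenKernel_le (hσ : σ ≠ 0) (ha : 0 < a) (hxz : a ≤ ‖x - z‖) :
    ‖greenKernel d σ x z‖ ≤ 1 / σ ^ 2 * ∫ t in Ioi 0, killedHeatProfile d σ (a ^ 2 / 2) t := by
  rw [greenKernel_eq_integral_killedHeatProfile, norm_mul, norm_of_nonneg (by positivity)]
  gcongr
  refine norm_integral_le_of_norm_le (integrableOn_killedHeatProfile hσ (by positivity)) ?_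
  filter_upwards [ae_restrict_mem measurableSet_Ioi] with t ht
  rw [norm_of_nonneg (killedHeatProfile_pos ht).le]
  exact antitone_killedHeatProfile ht (by gcongr)

theorem norm_greenKernelGrad_le (hσ : σ ≠ 0) (ha : 0 < a) (hxz : a ≤ ‖x - z‖) :
    ‖greenKernelGrad d σ x z‖ ≤
      1 / σ ^ 2 * ∫ t in Ioi 0, 4 / a * killedHeatProfile d σ (a ^ 2 / 4) t := by
  rw [greenKernelGrad_eq_integral_killedHeatProfile, norm_smul, norm_of_nonneg (by positivity)]
  gcongr
  refine norm_integral_le_of_norm_le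
    ((integrableOn_killedHeatProfile hσ (by positivity)).const_mul _) ?_
  filter_upwards [ae_restrict_mem measurableSet_Ioi] with t ht
  exact norm_killedHeatProfile_smul_le ha hxz ht

theorem greenKernel_pos (hσ : σ ≠ 0) (hxz : x ≠ z) : 0 < greenKernel d σ x z := by
  have : NeZero (volume.restrict (Ioi (0 : ℝ))) := ⟨by simp⟩
  rw [greenKernel_eq_integral_killedHeatProfile]
  refine mul_pos (by positivity)
    (integral_pos_of_ae_pos
      (integrableOn_killedHeatProfile_half_norm_sq hσ (sub_ne_zero.2 hxz)) ?_)
  filter_upwards [ae_restrict_mem measurableSet_Ioi] with t ht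
  exact killedHeatProfile_pos ht

theorem hasGradientAt_greenKernel (hσ : σ ≠ 0) (hxz : x ≠ z) :
    HasGradientAt (fun w => greenKernel d σ x w) (greenKernelGrad d σ x z) z := by
  simp only [greenKernel_eq_integral_killedHeatProfile,
    greenKernelGrad_eq_integral_killedHeatProfile]
  exact hasGradientAt_comp_of_hasDerivAt (hasGradientAt_integral_killedHeatProfile hσ hxz)
    (hasDerivAt_const_mul _)

variable {α : Measure (EuclideanSpace ℝ (Fin d))} [IsFiniteMeasure α]

theorem integrable_greenKernel (hσ : σ ≠ 0) (hr : 0 < r) (hα : ∀ᵐ x ∂α, r ≤ dist x y) :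
    Integrable (fun x => greenKernel d σ x y) α :=
  .of_bound stronglyMeasurable_greenKernel.aestronglyMeasurable _ <|
    hα.mono fun x hx => norm_greenKernel_le hσ hr (hx.trans_eq (dist_eq_norm x y))

theorem integrable_greenKernelGrad (hσ : σ ≠ 0) (hr : 0 < r) (hα : ∀ᵐ x ∂α, r ≤ dist x y) :
    Integrable (fun x => greenKernelGrad d σ x y) α :=
  .of_bound stronglyMeasurable_greenKernelGrad.aestronglyMeasurable _ <|
    hα.mono fun x hx => norm_greenKernelGrad_le hσ hr (hx.trans_eq (dist_eq_norm x y))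

theorem integral_greenKernel_pos [NeZero α] (hσ : σ ≠ 0) (hr : 0 < r)
    (hα : ∀ᵐ x ∂α, r ≤ dist x y) : 0 < ∫ x, greenKernel d σ x y ∂α :=
  integral_pos_of_ae_pos (integrable_greenKernel hσ hr hα) <|
    hα.mono fun _ hx => greenKernel_pos hσ (dist_pos.1 (hr.trans_le hx))

theorem hasGradientAt_integral_greenKernel (hσ : σ ≠ 0) (hr : 0 < r)
    (hα : ∀ᵐ x ∂α, r ≤ dist x y) :
    HasGradientAt (fun z => ∫ x, greenKernel d σ x z ∂α) (∫ x, greenKernelGrad d σ x y ∂α) y := by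
  have hfar : ∀ᵐ x ∂α, ∀ z ∈ ball y (r / 2), r / 2 ≤ ‖x - z‖ :=
    hα.mono fun x hx z hz => half_le_norm_sub_of_mem_ball hx hz
  refine hasGradientAt_integral_of_dominated_of_gradient_le
    (F := fun z x => greenKernel d σ x z) (F' := fun z x => greenKernelGrad d σ x z)
    (ball_mem_nhds y (half_pos hr))
    (Eventually.of_forall fun z => stronglyMeasurable_greenKernel.aestronglyMeasurable)
    (integrable_greenKernel hσ hr hα) (integrable_greenKernelGrad hσ hr hα)
    (hfar.mono fun x hx z hz => norm_greenKernelGrad_le hσ (half_pos hr) (hx z hz))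
    (integrable_const _) ?_
  filter_upwards [hfar] with x hx z hz
  exact hasGradientAt_greenKernel hσ (norm_sub_pos_iff.1 ((half_pos hr).trans_le (hx z hz)))

end GreenKernel

theorem stmt9_general (d : ℕ) (σ : ℝ) (hσ : σ ≠ 0)
    (α : Measure (EuclideanSpace ℝ (Fin d))) [IsFiniteMeasure α] [NeZero α]
    (y : EuclideanSpace ℝ (Fin d)) (hy : y ∉ measureSupport α) :
    Integrable (fun x => greenKernel d σ x y) α ∧
    Integrable (fun x => greenKernelGrad d σ x y) α ∧
    HasGradientAt (fun z => ∫ x, greenKernel d σ x z ∂α)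
      (∫ x, greenKernelGrad d σ x y ∂α) y ∧
    HasGradientAt (fun z => Real.log (∫ x, greenKernel d σ x z ∂α))
      ((∫ x, greenKernel d σ x y ∂α)⁻¹ • ∫ x, greenKernelGrad d σ x y ∂α) y := by
  obtain ⟨r, hr, hα⟩ := exists_pos_ae_le_dist_of_notMem_measureSupport hy
  have hgrad := hasGradientAt_integral_greenKernel hσ hr hα
  have hpos := integral_greenKernel_pos hσ hr hα
  exact ⟨integrable_greenKernel hσ hr hα, integrable_greenKernelGrad hσ hr hα, hgrad,
    hasGradientAt_comp_of_hasDerivAt hgrad (hasDerivAt_log hpos.ne')⟩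

/-- Corollary 2.4: off the support of `α`, the function `h = ∫ G_{σ²}(x,·) α(dx)` is finite
and differentiable with `∇h(y) = ∫ ∇_y G_{σ²}(x,y) α(dx)`, and the backward drift
`b(y) = ∇ log h(y)` is the mean of `∇_y log G_{σ²}(x,y)` under the posterior
`(1/h(y)) G_{σ²}(x,y) α(dx)` (note `∇_y log G_{σ²}(x,y) · G_{σ²}(x,y) = ∇_y G_{σ²}(x,y)`). -/
theorem stmt9 (d : ℕ) (hd : 3 ≤ d) (σ : ℝ) (hσ : 0 < σ)
    (α : Measure (EuclideanSpace ℝ (Fin d))) [IsProbabilityMeasure α]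
    (y : EuclideanSpace ℝ (Fin d)) (hy : y ∉ measureSupport α) :
    Integrable (fun x => greenKernel d σ x y) α ∧
    Integrable (fun x => greenKernelGrad d σ x y) α ∧
    HasGradientAt (fun z => ∫ x, greenKernel d σ x z ∂α)
      (∫ x, greenKernelGrad d σ x y ∂α) y ∧
    HasGradientAt (fun z => Real.log (∫ x, greenKernel d σ x z ∂α))
      ((∫ x, greenKernel d σ x y ∂α)⁻¹ • ∫ x, greenKernelGrad d σ x y ∂α) y :=
  stmt9_general d σ hσ.ne' α y hy
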